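/- Let $c, \rho, u_1, u_2 > 0$ with $q = \sqrt{u_1^2+u_2^2} < c$ and $u_1 < c$. Then the complex numbers $\lambda_{\pm} = -\frac{c\rho}{c^2-u_1^2}(c u_2 \mp u_1\sqrt{c^2-q^2}\, i)$ are the two non-real roots of the quartic polynomial $\det(\lambda A(U) - B(U))$ associated with the steady Euler system in Lagrangian coordinates, and they are complex conjugates of each other with nonzero imaginary part $\pm\frac{c\rho u_1\sqrt{c^2-q^2}}{c^2-u_1^2}$. -/

import Mathlib

/-!
Subtracting `p` times the first row of `μ A - B` from the second and pulling `μ` out of the last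
row makes the `4 × 4` determinant easy to expand. With `c² ρ = γ p` the result is, up to a nonzero
factor, `μ² ((c² - u₁²) μ² + 2 c² ρ u₂ μ + c² ρ² q²)` (`euler_det`). The quadratic factor has
quarter-discriminant `-c² ρ² u₁² (c² - q²)`, which is negative in the subsonic regime, so it equals
`(c² - u₁²) (μ - λ₊) (μ - λ₋)` (`euler_quadratic_factor`). The remaining roots are the double root
`0`, so every non-real root is `λ₊` or `λ₋`.
-/

open Matrix

/-- The matrix `A(U)` of the steady Euler system in Lagrangian coordinates. -/
noncomputable def eulerA (u₁ u₂ p ρ γ : ℝ) : Matrix (Fin 4) (Fin 4) ℝ :=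
  !![-(1/(ρ*u₁^2)), 0, 0, -(1/(ρ^2*u₁));
     1 - p/(ρ*u₁^2), 0, 1/(ρ*u₁), -(p/(ρ^2*u₁));
     0, 1, 0, 0;
     u₁, u₂, γ/((γ-1)*ρ), -(γ*p/((γ-1)*ρ^2))]

/-- The matrix `B(U)` of the steady Euler system in Lagrangian coordinates. -/
noncomputable def eulerB (u₁ u₂ p ρ : ℝ) : Matrix (Fin 4) (Fin 4) ℝ :=
  !![u₂/u₁^2, -(1/u₁), 0, 0;
     p*u₂/u₁^2, -(p/u₁), -(u₂/u₁), 0;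
     0, 0, 1, 0;
     0, 0, 0, 0]

/-- The characteristic polynomial of the pencil in closed form, for every complex `μ`. -/
lemma euler_det (γ u₁ u₂ p ρ : ℝ) (hγ : γ - 1 ≠ 0) (hρ : ρ ≠ 0) (hu₁ : u₁ ≠ 0) (mu : ℂ) :
    (mu • (eulerA u₁ u₂ p ρ γ).map (fun x => (x : ℂ)) -
      (eulerB u₁ u₂ p ρ).map (fun x => (x : ℂ))).det =
    mu^2 / ((ρ : ℂ)^4 * (u₁ : ℂ)^3 * ((γ : ℂ) - 1)) *
      (mu^2 * ρ * u₁^2 - γ * p * ((mu + ρ * u₂)^2 + ρ^2 * u₁^2)) := by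
  have h1 : (γ : ℂ) - 1 ≠ 0 := by exact_mod_cast hγ
  have h2 : (ρ : ℂ) ≠ 0 := by exact_mod_cast hρ
  have h3 : (u₁ : ℂ) ≠ 0 := by exact_mod_cast hu₁
  simp [eulerA, eulerB, Matrix.det_succ_row_zero, Fin.sum_univ_succ, Fin.succAbove]
  field_simp
  ring

/-- Factorization of the quadratic factor over `ℂ`. Here `k` stands for `cρ / (c² - u₁²)` and `s`
for `√(c² - q²)`; both enter only through the relations `hk` and `hs`. -/
lemma euler_quadratic_factor (c u₁ u₂ ρ k s mu : ℂ) (hk : k * (c^2 - u₁^2) = c * ρ)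
    (hs : s^2 = c^2 - (u₁^2 + u₂^2)) :
    (c^2 - u₁^2) * (mu - -k * (c * u₂ - u₁ * s * Complex.I)) *
        (mu - -k * (c * u₂ + u₁ * s * Complex.I)) =
      (c^2 - u₁^2) * mu^2 + 2 * c^2 * ρ * u₂ * mu + c^2 * ρ^2 * (u₁^2 + u₂^2) := by
  -- The constant term is `(c² - u₁²) k² (c² u₂² + u₁² s²)`, and
  -- `c² u₂² + u₁² s² = (c² - u₁²) (u₁² + u₂²)`, so it is `((c² - u₁²) k)² (u₁² + u₂²)`.
  linear_combination (2 * c * u₂ * mu + (u₁^2 + u₂^2) * (k * (c^2 - u₁^2) + c * ρ)) * hk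
    + (c^2 - u₁^2) * k^2 * u₁^2 * hs
    - (c^2 - u₁^2) * k^2 * u₁^2 * s^2 * Complex.I_sq

/-- the non-real eigenvalues `λ±` of `det(λ A - B) = 0` in the
subsonic regime are complex conjugates with nonzero imaginary part. -/
theorem euler_nonreal_eigenvalues
    (γ u₁ u₂ p ρ c q : ℝ) (hγ : 1 < γ) (hρ : 0 < ρ) (hp : 0 < p)
    (hu₁ : 0 < u₁) (hu₂ : 0 < u₂)
    (hc : c = Real.sqrt (γ * p / ρ)) (hq : q = Real.sqrt (u₁^2 + u₂^2))
    (hsub : q < c) (hu₁c : u₁ < c) :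
    ∀ lp lm : ℂ,
      lp = -((c*ρ/(c^2-u₁^2) : ℝ) : ℂ) *
        (((c*u₂ : ℝ) : ℂ) - ((u₁ * Real.sqrt (c^2-q^2) : ℝ) : ℂ) * Complex.I) →
      lm = -((c*ρ/(c^2-u₁^2) : ℝ) : ℂ) *
        (((c*u₂ : ℝ) : ℂ) + ((u₁ * Real.sqrt (c^2-q^2) : ℝ) : ℂ) * Complex.I) →
      ((lp • (eulerA u₁ u₂ p ρ γ).map (fun x => (x : ℂ)) -
          (eulerB u₁ u₂ p ρ).map (fun x => (x : ℂ))).det = 0 ∧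
       (lm • (eulerA u₁ u₂ p ρ γ).map (fun x => (x : ℂ)) -
          (eulerB u₁ u₂ p ρ).map (fun x => (x : ℂ))).det = 0 ∧
       lm = starRingEnd ℂ lp ∧
       lp.im = c*ρ*u₁*Real.sqrt (c^2-q^2)/(c^2-u₁^2) ∧
       lp.im ≠ 0 ∧ lm.im = -(c*ρ*u₁*Real.sqrt (c^2-q^2)/(c^2-u₁^2)) ∧
       (∀ mu : ℂ, (mu • (eulerA u₁ u₂ p ρ γ).map (fun x => (x : ℂ)) -
          (eulerB u₁ u₂ p ρ).map (fun x => (x : ℂ))).det = 0 →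
          mu.im ≠ 0 → mu = lp ∨ mu = lm)) := by
  have hγ1 : 0 < γ - 1 := by linarith
  have hc2 : c^2 = γ * p / ρ := by
    rw [hc]; exact Real.sq_sqrt (by positivity)
  have hγp : γ * p = c^2 * ρ := by rw [hc2]; field_simp
  have hq2 : q^2 = u₁^2 + u₂^2 := by
    rw [hq]; exact Real.sq_sqrt (by positivity)
  have hq0 : 0 ≤ q := by rw [hq]; positivity
  have hcpos : 0 < c := hu₁.trans hu₁c
  have hd : 0 < c^2 - u₁^2 := by nlinarith
  have hcq : 0 < c^2 - q^2 := by nlinarith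
  have hs : 0 < Real.sqrt (c^2 - q^2) := Real.sqrt_pos.mpr hcq
  have hs2 : Real.sqrt (c^2 - q^2)^2 = c^2 - (u₁^2 + u₂^2) := by
    rw [Real.sq_sqrt hcq.le, hq2]
  generalize Real.sqrt (c^2 - q^2) = s at hs hs2 ⊢
  have hk : c * ρ / (c^2 - u₁^2) * (c^2 - u₁^2) = c * ρ := div_mul_cancel₀ _ hd.ne'
  intro lp lm hlp hlm
  have hdet : ∀ mu : ℂ, (mu • (eulerA u₁ u₂ p ρ γ).map (fun x => (x : ℂ)) -
      (eulerB u₁ u₂ p ρ).map (fun x => (x : ℂ))).det =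
      mu^2 / ((ρ : ℂ)^4 * (u₁ : ℂ)^3 * ((γ : ℂ) - 1)) *
        (-ρ * (((c : ℂ)^2 - u₁^2) * (mu - lp) * (mu - lm))) := by
    intro mu
    have hfac := euler_quadratic_factor c u₁ u₂ ρ ((c * ρ / (c^2 - u₁^2) : ℝ) : ℂ) s mu
      (by exact_mod_cast hk) (by exact_mod_cast hs2)
    have hγp' : (γ : ℂ) * p = c^2 * ρ := by exact_mod_cast hγp
    rw [euler_det γ u₁ u₂ p ρ hγ1.ne' hρ.ne' hu₁.ne' mu, hγp', hlp, hlm]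
    push_cast at hfac ⊢
    rw [hfac]
    ring
  have him : lp.im = c * ρ * u₁ * s / (c^2 - u₁^2) := by
    rw [hlp, ← Complex.ofReal_neg, Complex.im_ofReal_mul, Complex.sub_im, Complex.ofReal_im,
      Complex.im_ofReal_mul, Complex.I_im]
    ring
  have hconj : lm = starRingEnd ℂ lp := by
    rw [hlp, hlm]
    simp only [map_mul, map_neg, map_sub, Complex.conj_ofReal, Complex.conj_I]
    ring
  refine ⟨by simp [hdet], by simp [hdet], hconj, him, ?_, ?_, ?_⟩
  · rw [him]; positivity
  · rw [hconj, Complex.conj_im, him]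
  · intro mu hmu hmuim
    have hmu0 : mu ≠ 0 := by rintro rfl; simp at hmuim
    have h1 : (γ : ℂ) - 1 ≠ 0 := by exact_mod_cast hγ1.ne'
    have h2 : (ρ : ℂ) ≠ 0 := by exact_mod_cast hρ.ne'
    have h3 : (u₁ : ℂ) ≠ 0 := by exact_mod_cast hu₁.ne'
    have h4 : (c : ℂ)^2 - u₁^2 ≠ 0 := by exact_mod_cast hd.ne'
    rw [hdet] at hmu
    simpa [hmu0, h1, h2, h3, h4, sub_eq_zero] using hmu
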